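/- Let m, n ≥ 1, let b : Fin m → ZMod 2 and k : Fin m → ℕ with k i ≤ n for all i, and write b^c i = 1 + b i (entrywise complement in ZMod 2). Then, for the n×m concatenated bit- and phase-flip repetition code, for all real x, y: the weight enumerator of the stabilizer coset (M(b,k) + X̄) + S equals F^e_m(u, w), and the weight enumerator of (M(b,k) + Ȳ) + S equals F^o_m(u, w), where u i = h^{b^c i}_{k i, n}(x,y) and w i = h^{b^c i}_{n − k i, n}(x,y). -/

import Mathlib

/-!
A Pauli string lies in the coset of `M(b,k) + X̄` (or `M(b,k) + Ȳ`) exactly when its X-part has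
parity `1 + b i` in every block `i` and its Z-part in block `i` is the indicator of `j < k i`
shifted by a constant `ζ i`, where `∑ i, ζ i` is `0` for `X̄` and `1` for `Ȳ`
(`image_Xbar`, `image_Ybar`).

Since the weight monomial is a product over qubits (`monomial_eq_prod`), the enumerator is a sum
over `ζ` of prescribed parity of a product over blocks of sums over X-parts of prescribed parity
(`enum2_cosetSet`). Both layers are evaluated by the same character-sum identity,
`sum_parity`: summing a product function over the binary vectors of parity `β` gives
`(∏ (q 0 + q 1) ± ∏ (q 0 - q 1)) / 2`. For a block, the second product vanishes as soon as one
Z-entry is nonzero, which is the case distinction in `hpol` (`block_zero`, `block_one`); for the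
outer layer the identity yields `Fe` and `Fo`.
-/

/-- The weight of a Pauli string on qubits indexed by `Fin m × Fin n`. -/
def wt2 {m n : ℕ} (v : Fin m × Fin n → ZMod 2 × ZMod 2) : ℕ :=
  (Finset.univ.filter fun p => v p ≠ (0, 0)).card

/-- The weight enumerator of a finite set of Pauli strings on `Fin m × Fin n`. -/
noncomputable def enum2 {m n : ℕ} (T : Finset (Fin m × Fin n → ZMod 2 × ZMod 2))
    (x y : ℝ) : ℝ :=
  ∑ v ∈ T, x ^ (m * n - wt2 v) * y ^ wt2 v

/-- The stabilizer group of the `n × m` concatenated bit- and phase-flip repetition code: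
even X-weight in each block, Z-part constant within each block, and the block Z-values
sum to zero. -/
def concatStab (m n : ℕ) : Finset (Fin m × Fin n → ZMod 2 × ZMod 2) :=
  Finset.univ.filter fun v =>
    (∀ i, ∑ j, (v (i, j)).1 = 0) ∧
    ∃ ζ : Fin m → ZMod 2, (∀ i j, (v (i, j)).2 = ζ i) ∧ ∑ i, ζ i = 0

/-- `M(b,k)`: block `i` has X-part `b i` at position 0 (and 0 elsewhere) and Z-part 1 at
positions `j < k i` (and 0 elsewhere). -/
def Mbk (m n : ℕ) (b : Fin m → ZMod 2) (k : Fin m → ℕ) :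
    Fin m × Fin n → ZMod 2 × ZMod 2 :=
  fun p => (if (p.2 : ℕ) = 0 then b p.1 else 0, if (p.2 : ℕ) < k p.1 then 1 else 0)

/-- The logical-Z representative: Z-part 1 at every position of block 0. -/
def ZbarC (m n : ℕ) : Fin m × Fin n → ZMod 2 × ZMod 2 :=
  fun p => (0, if (p.1 : ℕ) = 0 then 1 else 0)

/-- The logical-X representative: X-part 1 at position 0 of every block. -/
def XbarC (m n : ℕ) : Fin m × Fin n → ZMod 2 × ZMod 2 :=
  fun p => (if (p.2 : ℕ) = 0 then 1 else 0, 0)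

/-- The logical-Y representative. -/
def YbarC (m n : ℕ) : Fin m × Fin n → ZMod 2 × ZMod 2 :=
  XbarC m n + ZbarC m n

noncomputable def fe (n : ℕ) (x y : ℝ) : ℝ := ((x + y) ^ n + (x - y) ^ n) / 2

noncomputable def fo (n : ℕ) (x y : ℝ) : ℝ := ((x + y) ^ n - (x - y) ^ n) / 2

noncomputable def g (k n : ℕ) (x y : ℝ) : ℝ := (1 / 2) * (x + y) ^ (n - k) * (2 * y) ^ k

/-- `h^b_{k,n}`. -/
noncomputable def hpol (b : ZMod 2) (k n : ℕ) (x y : ℝ) : ℝ :=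
  if k = 0 then (if b = 0 then fe n x y else fo n x y) else g k n x y

noncomputable def Fe (m : ℕ) (u w : Fin m → ℝ) : ℝ :=
  ((∏ i, (u i + w i)) + ∏ i, (u i - w i)) / 2

noncomputable def Fo (m : ℕ) (u w : Fin m → ℝ) : ℝ :=
  ((∏ i, (u i + w i)) - ∏ i, (u i - w i)) / 2

/-- The nontrivial character of `ZMod 2`, with real values. -/
noncomputable def chi (a : ZMod 2) : ℝ := if a = 0 then 1 else -1

lemma zmod2_cases (a : ZMod 2) : a = 0 ∨ a = 1 := by
  revert a; decide

lemma chi_add (a c : ZMod 2) : chi (a + c) = chi a * chi c := by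
  have h : (1 : ZMod 2) + 1 = 0 := by decide
  rcases zmod2_cases a with rfl | rfl <;> rcases zmod2_cases c with rfl | rfl <;>
    simp [chi, h]

lemma chi_sum {ι : Type*} (s : Finset ι) (a : ι → ZMod 2) :
    chi (∑ i ∈ s, a i) = ∏ i ∈ s, chi (a i) := by
  classical
  induction s using Finset.induction_on with
  | empty => simp [chi]
  | insert i s hi ih => rw [Finset.sum_insert hi, Finset.prod_insert hi, chi_add, ih]

lemma sum_zmod2 (f : ZMod 2 → ℝ) : ∑ a, f a = f 0 + f 1 :=
  Fin.sum_univ_two f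

/-- Sum of a product function over the binary vectors of parity `β`, obtained by writing the
indicator of the parity condition as `(1 + χ β * χ (∑ a)) / 2`. -/
lemma sum_parity {ι : Type*} [Fintype ι] [DecidableEq ι] (q : ι → ZMod 2 → ℝ) (β : ZMod 2) :
    ∑ a ∈ (Finset.univ : Finset (ι → ZMod 2)).filter (fun a => ∑ i, a i = β), ∏ i, q i (a i)
      = ((∏ i, (q i 0 + q i 1)) + chi β * ∏ i, (q i 0 - q i 1)) / 2 := by
  have h1 : ∏ i, (q i 0 + q i 1) = ∑ a : ι → ZMod 2, ∏ i, q i (a i) := by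
    rw [← Fintype.prod_sum]
    exact Finset.prod_congr rfl fun i _ => (sum_zmod2 _).symm
  have h2 : ∏ i, (q i 0 - q i 1) = ∑ a : ι → ZMod 2, chi (∑ i, a i) * ∏ i, q i (a i) := by
    have : ∀ a : ι → ZMod 2,
        chi (∑ i, a i) * ∏ i, q i (a i) = ∏ i, (chi (a i) * q i (a i)) := by
      intro a; rw [chi_sum, Finset.prod_mul_distrib]
    simp_rw [this]
    rw [← Fintype.prod_sum (fun i a => chi a * q i a)]
    refine Finset.prod_congr rfl fun i _ => ?_
    rw [sum_zmod2]
    simp [chi, sub_eq_add_neg]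
  rw [h1, h2, Finset.mul_sum, ← Finset.sum_add_distrib, Finset.sum_div, Finset.sum_filter]
  refine Finset.sum_congr rfl fun a _ => ?_
  rcases zmod2_cases β with rfl | rfl <;> rcases zmod2_cases (∑ i, a i) with h | h <;>
    rw [h] <;> simp [chi]

lemma prod_ite_lt (n k : ℕ) (hk : k ≤ n) (A B : ℝ) :
    ∏ j : Fin n, (if (j : ℕ) < k then A else B) = A ^ k * B ^ (n - k) := by
  rw [Fin.prod_univ_eq_prod_range (fun j => if j < k then A else B) n,
    ← Finset.prod_range_mul_prod_Ico _ hk]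
  congr 1
  · rw [Finset.prod_congr rfl (g := fun _ => A)]
    · simp
    · intro j hj; simp [Finset.mem_range.1 hj]
  · rw [Finset.prod_congr rfl (g := fun _ => B)]
    · simp
    · intro j hj; simp [(Finset.mem_Ico.1 hj).1]

/-- The contribution of a single qubit to the weight monomial. -/
noncomputable def qubit (x y : ℝ) (a : ZMod 2 × ZMod 2) : ℝ := if a = (0, 0) then x else y

lemma monomial_eq_prod {m n : ℕ} (v : Fin m × Fin n → ZMod 2 × ZMod 2) (x y : ℝ) :
    x ^ (m * n - wt2 v) * y ^ wt2 v = ∏ i, ∏ j, qubit x y (v (i, j)) := by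
  rw [← Fintype.prod_prod_type (fun p => qubit x y (v p))]
  have hc := Finset.card_filter_add_card_filter_not
    (s := (Finset.univ : Finset (Fin m × Fin n))) (fun p => v p = (0, 0))
  rw [Finset.card_univ, Fintype.card_prod, Fintype.card_fin, Fintype.card_fin] at hc
  unfold qubit
  rw [Finset.prod_ite, Finset.prod_const, Finset.prod_const]
  unfold wt2
  congr 2
  simp only [ne_eq]
  omega

/-- Enumerator of one block with X-parity `β`, cut `k` and Z-shift `z`. -/
noncomputable def block (n k : ℕ) (β z : ZMod 2) (x y : ℝ) : ℝ :=
  ∑ a ∈ (Finset.univ : Finset (Fin n → ZMod 2)).filter (fun a => ∑ j, a j = β),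
    ∏ j : Fin n, qubit x y (a j, (if (j : ℕ) < k then 1 else 0) + z)

lemma block_zero (n k : ℕ) (hk : k ≤ n) (β : ZMod 2) (x y : ℝ) :
    block n k β 0 x y = hpol β k n x y := by
  unfold block
  rw [sum_parity (fun (j : Fin n) a => qubit x y (a, (if (j : ℕ) < k then 1 else 0) + 0))]
  have h1 : ∀ j : Fin n, qubit x y (0, (if (j : ℕ) < k then 1 else 0) + 0)
      + qubit x y (1, (if (j : ℕ) < k then 1 else 0) + 0)
      = if (j : ℕ) < k then 2 * y else x + y := by
    intro j; split_ifs <;> simp [qubit, two_mul]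
  have h2 : ∀ j : Fin n, qubit x y (0, (if (j : ℕ) < k then 1 else 0) + 0)
      - qubit x y (1, (if (j : ℕ) < k then 1 else 0) + 0)
      = if (j : ℕ) < k then 0 else x - y := by
    intro j; split_ifs <;> simp [qubit]
  simp_rw [h1, h2]
  rw [prod_ite_lt n k hk, prod_ite_lt n k hk]
  unfold hpol fe fo g chi
  by_cases hk0 : k = 0
  · subst hk0
    rw [if_pos rfl]
    split_ifs <;> simp [sub_eq_add_neg]
  · rw [zero_pow hk0, if_neg hk0]; ring

lemma block_one (n k : ℕ) (hk : k ≤ n) (β : ZMod 2) (x y : ℝ) :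
    block n k β 1 x y = hpol β (n - k) n x y := by
  have h11 : (1 : ZMod 2) + 1 = 0 := by decide
  unfold block
  rw [sum_parity (fun (j : Fin n) a => qubit x y (a, (if (j : ℕ) < k then 1 else 0) + 1))]
  have h1 : ∀ j : Fin n, qubit x y (0, (if (j : ℕ) < k then 1 else 0) + 1)
      + qubit x y (1, (if (j : ℕ) < k then 1 else 0) + 1)
      = if (j : ℕ) < k then x + y else 2 * y := by
    intro j; split_ifs <;> simp [qubit, two_mul, h11]
  have h2 : ∀ j : Fin n, qubit x y (0, (if (j : ℕ) < k then 1 else 0) + 1)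
      - qubit x y (1, (if (j : ℕ) < k then 1 else 0) + 1)
      = if (j : ℕ) < k then x - y else 0 := by
    intro j; split_ifs <;> simp [qubit, h11]
  simp_rw [h1, h2]
  rw [prod_ite_lt n k hk, prod_ite_lt n k hk]
  have hnk : n - (n - k) = k := by omega
  unfold hpol fe fo g chi
  rw [hnk]
  by_cases hk0 : n - k = 0
  · obtain rfl : k = n := by omega
    rw [if_pos hk0]
    split_ifs <;> simp [sub_eq_add_neg]
  · rw [zero_pow hk0, if_neg hk0]; ring

/-- The Pauli strings whose X-part has parity `β i` in block `i` and whose Z-part is the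
indicator of `j < k i` shifted in block `i` by a constant `ζ i`, the shifts summing to `t`. -/
def cosetSet (m n : ℕ) (k : Fin m → ℕ) (β : Fin m → ZMod 2) (t : ZMod 2) :
    Finset (Fin m × Fin n → ZMod 2 × ZMod 2) :=
  Finset.univ.filter fun v =>
    (∀ i, ∑ j, (v (i, j)).1 = β i) ∧
    ∃ ζ : Fin m → ZMod 2,
      (∀ i j, (v (i, j)).2 = (if (j : ℕ) < k i then 1 else 0) + ζ i) ∧ ∑ i, ζ i = t

/-- The Pauli string with block shifts `q.1` and X-parts `q.2`. -/
def assemble (m n : ℕ) (k : Fin m → ℕ)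
    (q : (Fin m → ZMod 2) × (Fin m → Fin n → ZMod 2)) : Fin m × Fin n → ZMod 2 × ZMod 2 :=
  fun p => (q.2 p.1 p.2, (if (p.2 : ℕ) < k p.1 then 1 else 0) + q.1 p.1)

/-- Injectivity needs a nonempty block: otherwise the shifts are invisible. -/
lemma assemble_injective (m n : ℕ) (hn : 1 ≤ n) (k : Fin m → ℕ) :
    Function.Injective (assemble m n k) := by
  rintro ⟨ζ, a⟩ ⟨ζ', a'⟩ h
  have h' : ∀ i j, assemble m n k (ζ, a) (i, j) = assemble m n k (ζ', a') (i, j) :=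
    fun i j => congrFun h (i, j)
  simp only [assemble, Prod.mk.injEq, add_right_inj] at h'
  exact Prod.ext (funext fun i => (h' i ⟨0, hn⟩).2) (funext fun i => funext fun j => (h' i j).1)

lemma cosetSet_eq_image (m n : ℕ) (k : Fin m → ℕ) (β : Fin m → ZMod 2) (t : ZMod 2) :
    cosetSet m n k β t =
      (((Finset.univ : Finset (Fin m → ZMod 2)).filter fun ζ => ∑ i, ζ i = t) ×ˢ
        Fintype.piFinset fun i =>
          (Finset.univ : Finset (Fin n → ZMod 2)).filter fun a => ∑ j, a j = β i).image
        (assemble m n k) := by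
  ext v
  simp only [cosetSet, Finset.mem_filter, Finset.mem_univ, true_and, Finset.mem_image,
    Finset.mem_product, Fintype.mem_piFinset, Prod.exists]
  constructor
  · rintro ⟨hX, ζ, hZ, ht⟩
    exact ⟨ζ, fun i j => (v (i, j)).1, ⟨ht, hX⟩,
      funext fun p => Prod.ext rfl (hZ p.1 p.2).symm⟩
  · rintro ⟨ζ, a, ⟨ht, hX⟩, rfl⟩
    exact ⟨hX, ζ, fun _ _ => rfl, ht⟩

lemma enum2_cosetSet (m n : ℕ) (hn : 1 ≤ n) (k : Fin m → ℕ) (hk : ∀ i, k i ≤ n)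
    (β : Fin m → ZMod 2) (t : ZMod 2) (x y : ℝ) :
    enum2 (cosetSet m n k β t) x y =
      ((∏ i, (hpol (β i) (k i) n x y + hpol (β i) (n - k i) n x y))
        + chi t * ∏ i, (hpol (β i) (k i) n x y - hpol (β i) (n - k i) n x y)) / 2 := by
  unfold enum2
  rw [cosetSet_eq_image, Finset.sum_image (assemble_injective m n hn k).injOn,
    Finset.sum_product]
  simp_rw [monomial_eq_prod, ← block_zero n _ (hk _), ← block_one n _ (hk _)]
  rw [← sum_parity (fun i z => block n (k i) (β i) z x y)]
  refine Finset.sum_congr rfl fun ζ _ => ?_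
  unfold block
  rw [Finset.prod_univ_sum]
  rfl

lemma zmod2_add_eq (c s v : ZMod 2) : c + s = v ↔ s = c + v := by
  revert c s v; decide

lemma mem_image_add {m n : ℕ} (c v : Fin m × Fin n → ZMod 2 × ZMod 2) :
    (v ∈ (concatStab m n).image fun s => c + s) ↔ c + v ∈ concatStab m n := by
  have h : ∀ s : Fin m × Fin n → ZMod 2 × ZMod 2, c + s = v ↔ s = c + v := by
    intro s
    simp only [funext_iff, Prod.ext_iff, Pi.add_apply, Prod.fst_add, Prod.snd_add, zmod2_add_eq]
  simp only [Finset.mem_image, h, exists_eq_right]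

lemma sum_first (n : ℕ) (hn : 1 ≤ n) (c : ZMod 2) :
    ∑ j : Fin n, (if (j : ℕ) = 0 then c else 0) = c := by
  rw [Finset.sum_eq_single (⟨0, hn⟩ : Fin n)]
  · simp
  · intro j _ hj
    exact if_neg fun h => hj (Fin.ext h)
  · simp

/-- A coset representative with X-part `β i` at the first position of block `i` and Z-part the
cut at `k i` shifted by `δ i` has coset `cosetSet m n k β (∑ i, δ i)`. -/
lemma image_eq_cosetSet (m n : ℕ) (hn : 1 ≤ n) (k : Fin m → ℕ) (β δ : Fin m → ZMod 2)
    (c : Fin m × Fin n → ZMod 2 × ZMod 2)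
    (hX : ∀ i j, (c (i, j)).1 = if (j : ℕ) = 0 then β i else 0)
    (hZ : ∀ i j, (c (i, j)).2 = (if (j : ℕ) < k i then 1 else 0) + δ i) :
    ((concatStab m n).image fun s => c + s) = cosetSet m n k β (∑ i, δ i) := by
  ext v
  rw [mem_image_add]
  simp only [concatStab, cosetSet, Finset.mem_filter, Finset.mem_univ, true_and, Pi.add_apply,
    Prod.fst_add, Prod.snd_add, hX, hZ, Finset.sum_add_distrib, sum_first n hn]
  refine and_congr (forall_congr' fun i => ?_) ?_
  · rw [zmod2_add_eq, add_zero]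
  · constructor
    · rintro ⟨ζ, h, h0⟩
      refine ⟨fun i => δ i + ζ i, fun i j => ?_, ?_⟩
      · rw [(zmod2_add_eq _ _ _).1 (h i j), add_assoc]
      · rw [Finset.sum_add_distrib, h0, add_zero]
    · rintro ⟨ζ, h, h0⟩
      refine ⟨fun i => δ i + ζ i, fun i j => ?_, ?_⟩
      · rw [zmod2_add_eq, h i j, add_assoc, ← add_assoc (δ i),
          CharTwo.add_self_eq_zero, zero_add]
      · rw [Finset.sum_add_distrib, h0, CharTwo.add_self_eq_zero]

lemma image_Xbar (m n : ℕ) (hn : 1 ≤ n) (b : Fin m → ZMod 2) (k : Fin m → ℕ) :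
    ((concatStab m n).image fun s => (Mbk m n b k + XbarC m n) + s)
      = cosetSet m n k (fun i => 1 + b i) 0 := by
  rw [image_eq_cosetSet m n hn k (fun i => 1 + b i) (fun _ => 0), Finset.sum_const_zero]
  · intro i j
    simp only [Mbk, XbarC, Pi.add_apply, Prod.fst_add]
    split_ifs <;> simp [add_comm]
  · intro i j
    simp [Mbk, XbarC]

lemma image_Ybar (m n : ℕ) (hm : 1 ≤ m) (hn : 1 ≤ n) (b : Fin m → ZMod 2) (k : Fin m → ℕ) :
    ((concatStab m n).image fun s => (Mbk m n b k + YbarC m n) + s)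
      = cosetSet m n k (fun i => 1 + b i) 1 := by
  rw [image_eq_cosetSet m n hn k (fun i => 1 + b i) (fun i => if (i : ℕ) = 0 then 1 else 0),
    sum_first m hm]
  · intro i j
    simp only [Mbk, XbarC, YbarC, ZbarC, Pi.add_apply, Prod.fst_add]
    split_ifs <;> simp [add_comm]
  · intro i j
    simp [Mbk, XbarC, YbarC, ZbarC]

theorem weight_enumerator_concat_coset_Xbar_Ybar (m n : ℕ) (hm : 1 ≤ m) (hn : 1 ≤ n)
    (b : Fin m → ZMod 2) (k : Fin m → ℕ) (hk : ∀ i, k i ≤ n) (x y : ℝ) :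
    enum2 ((concatStab m n).image fun s => (Mbk m n b k + XbarC m n) + s) x y
        = Fe m (fun i => hpol (1 + b i) (k i) n x y)
            (fun i => hpol (1 + b i) (n - k i) n x y) ∧
      enum2 ((concatStab m n).image fun s => (Mbk m n b k + YbarC m n) + s) x y
        = Fo m (fun i => hpol (1 + b i) (k i) n x y)
            (fun i => hpol (1 + b i) (n - k i) n x y) := by
  rw [image_Xbar m n hn, image_Ybar m n hm hn, enum2_cosetSet m n hn k hk,
    enum2_cosetSet m n hn k hk]
  constructor
  · simp [Fe, chi]
  · simp [Fo, chi, sub_eq_add_neg]
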